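/- Let k ≥ 2 and j ∈ {1,…,k−1}. With high probability, for all p ≥ p_{M_j} simultaneously, there are no copies of M_j^- in G_p. -/

import Mathlib

open MeasureTheory Filter

attribute [local instance] Classical.propDecidable

namespace RSC

variable {V : Type*}

/-- `A` is an `i`-dimensional simplex of the complex `G`. -/
def IsSimplex (G : Set (Finset V)) (i : ℕ) (A : Finset V) : Prop :=
  A ∈ G ∧ A.card = i + 1

/-- A `k`-dimensional simplicial complex on vertex set `V`. -/
structure IsKComplex (G : Set (Finset V)) (k : ℕ) : Prop where
  down : ∀ A ∈ G, ∀ B, B ⊆ A → B.Nonempty → B ∈ G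
  singletons : ∀ v : V, ({v} : Finset V) ∈ G
  dim : ∀ A ∈ G, A.card ≤ k + 1

/-- `i`-cochains with `F₂`-coefficients. -/
abbrev Cochain (G : Set (Finset V)) (i : ℕ) : Type _ :=
  {A : Finset V // IsSimplex G i A} → ZMod 2

/-- The coboundary map `δ^i : C^i(G) → C^{i+1}(G)`. -/
noncomputable def coboundary (G : Set (Finset V)) (i : ℕ) :
    Cochain G i →ₗ[ZMod 2] Cochain G (i + 1) where
  toFun f := fun σ => ∑ τ ∈ Finset.powersetCard (i + 1) (σ : Finset V),
      if h : IsSimplex G i τ then f ⟨τ, h⟩ else 0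
  map_add' f g := by
    funext σ
    simp only [Pi.add_apply, ← Finset.sum_add_distrib]
    refine Finset.sum_congr rfl fun τ _ => ?_
    by_cases h : IsSimplex G i τ <;> simp [h]
  map_smul' c f := by
    funext σ
    simp only [Pi.smul_apply, RingHom.id_apply, Finset.smul_sum]
    refine Finset.sum_congr rfl fun τ _ => ?_
    by_cases h : IsSimplex G i τ <;> simp [h]

/-- The submodule of `i`-cocycles. -/
noncomputable def cocycles (G : Set (Finset V)) (i : ℕ) : Submodule (ZMod 2) (Cochain G i) :=
  LinearMap.ker (coboundary G i)

/-- The submodule of `i`-coboundaries (`δ^{-1}` is the zero map). -/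
noncomputable def coboundaries (G : Set (Finset V)) : (i : ℕ) → Submodule (ZMod 2) (Cochain G i)
  | 0 => ⊥
  | (i + 1) => LinearMap.range (coboundary G i)

/-- The `i`-th cohomology group `H^i(G;F₂) = ker δ^i / im δ^{i-1}`. -/
noncomputable abbrev cohomology (G : Set (Finset V)) (i : ℕ) :=
  (cocycles G i) ⧸ ((coboundaries G i).comap (cocycles G i).subtype)

/-- `F₂`-cohomological `j`-connectedness: `H^0 ≅ F₂` and `H^i = 0` for `1 ≤ i ≤ j`. -/
def CohomConnected (G : Set (Finset V)) (j : ℕ) : Prop :=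
  Nonempty (cohomology G 0 ≃ₗ[ZMod 2] ZMod 2) ∧
    ∀ i, 1 ≤ i → i ≤ j → Subsingleton (cohomology G i)

/-- The `j`-flower in `K` with centre `C`: the set of petals `C ∪ {w}`, `w ∈ K \ C`. -/
def Flower [DecidableEq V] (K C : Finset V) : Set (Finset V) :=
  {P | ∃ w ∈ K \ C, P = insert w C}

/-- A copy of `M_j^-`: a `k`-simplex `K` together with a `(j-1)`-simplex `C ⊆ K` such that
each petal of the flower `F(K,C)` is contained in no `k`-simplex other than `K`. -/
def IsMjMinus [DecidableEq V] (G : Set (Finset V)) (k j : ℕ) (K C : Finset V) : Prop :=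
  IsSimplex G k K ∧ C ∈ G ∧ C.card = j ∧ C ⊆ K ∧
    ∀ P ∈ Flower K C, ∀ K', IsSimplex G k K' → P ⊆ K' → K' = K

/-- A `j`-cycle: every `(j-1)`-simplex lies in an even number of members of `J`. -/
def IsCycle (G : Set (Finset V)) (j : ℕ) (J : Finset (Finset V)) : Prop :=
  (∀ σ ∈ J, IsSimplex G j σ) ∧
    ∀ τ : Finset V, τ.card = j → Even (J.filter (fun σ => τ ⊆ σ)).card

/-- A copy of `M_j`. -/
def IsMj [DecidableEq V] (G : Set (Finset V)) (k j : ℕ) (K C : Finset V)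
    (J : Finset (Finset V)) : Prop :=
  IsMjMinus G k j K C ∧ IsCycle G j J ∧ ∃! P : Finset V, P ∈ J ∧ P ∈ Flower K C

/-- A `j`-shell: a `(j+2)`-set all of whose `(j+1)`-subsets are `j`-simplices. -/
def IsShell (G : Set (Finset V)) (j : ℕ) (A : Finset V) : Prop :=
  A.card = j + 2 ∧ ∀ τ ⊆ A, τ.card = j + 1 → τ ∈ G

/-- A copy of `M_j^*`. -/
def IsMjStar [DecidableEq V] (G : Set (Finset V)) (k j : ℕ) (K C : Finset V) (w a : V) : Prop :=
  IsMjMinus G k j K C ∧ w ∈ K \ C ∧ a ∉ K ∧ IsShell G j (insert a (insert w C))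

/-- The support of a cochain. -/
def cochainSupport {G : Set (Finset V)} {i : ℕ} (f : Cochain G i) : Set (Finset V) :=
  {A | ∃ h : IsSimplex G i A, f ⟨A, h⟩ = 1}

/-- A cochain arising from a copy of `M_j^-`: its support is the flower `F(K,C)`. -/
def ArisesFrom [DecidableEq V] (G : Set (Finset V)) (k j : ℕ) (f : Cochain G j)
    (K C : Finset V) : Prop :=
  IsMjMinus G k j K C ∧ cochainSupport f = Flower K C

/-- A `j`-cocycle generated by copies of `M_j^-`: it differs by a `j`-coboundary from a sum
of `j`-cocycles arising from copies of `M_j^-`. -/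
def GeneratedByMjMinus [DecidableEq V] (G : Set (Finset V)) (k j : ℕ) (f : Cochain G j) : Prop :=
  ∃ (m : ℕ) (fs : Fin m → Cochain G j),
    (∀ i, ∃ K C, ArisesFrom G k j (fs i) K C) ∧
      f - (∑ i, fs i) ∈ coboundaries G j

/-- Membership in `N_G`: a `j`-cocycle not generated by copies of `M_j^-`. -/
def InNG [DecidableEq V] (G : Set (Finset V)) (k j : ℕ) (f : Cochain G j) : Prop :=
  f ∈ cocycles G j ∧ ¬ GeneratedByMjMinus G k j f

/-- Traversability: the transitive closure of "lying in a common `k`-simplex" is `S × S`. -/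
def Traversable (G : Set (Finset V)) (k : ℕ) (S : Set (Finset V)) : Prop :=
  ∀ σ₁ ∈ S, ∀ σ₂ ∈ S,
    Relation.TransGen
      (fun a b => a ∈ S ∧ b ∈ S ∧ ∃ K, IsSimplex G k K ∧ a ⊆ K ∧ b ⊆ K) σ₁ σ₂

/-- A local obstacle: a `k`-simplex containing at least `k-j+1` many `j`-simplices,
each lying in no other `k`-simplex. -/
def IsLocalObstacle (G : Set (Finset V)) (k j : ℕ) (K : Finset V) : Prop :=
  IsSimplex G k K ∧
    k - j + 1 ≤ {σ : Finset V | IsSimplex G j σ ∧ σ ⊆ K ∧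
      ∀ K', IsSimplex G k K' → σ ⊆ K' → K' = K}.ncard

/-- The random complex `G_p` given birth times `t`: all singletons together with all
non-empty subsets of `(k+1)`-sets with birth time at most `p`. -/
def complexAt (k n : ℕ) (t : Finset (Fin n) → ℝ) (p : ℝ) : Set (Finset (Fin n)) :=
  {A | (∃ v, A = {v}) ∨
    (A.Nonempty ∧ ∃ K : Finset (Fin n), K.card = k + 1 ∧ t K ≤ p ∧ A ⊆ K)}

/-- The distribution of birth times: i.i.d. uniform on `[0,1]`. -/
noncomputable def birthMeasure (n : ℕ) : Measure (Finset (Fin n) → ℝ) :=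
  Measure.pi fun _ => volume.restrict (Set.Icc (0 : ℝ) 1)

/-- `p_{M_j}`: the supremum of the probabilities `p ∈ [0,1]` at which `G_p` contains
a copy of `M_j`. -/
noncomputable def pMj (k j n : ℕ) (t : Finset (Fin n) → ℝ) : ℝ :=
  sSup {p : ℝ | p ∈ Set.Icc (0 : ℝ) 1 ∧
    ∃ K C J, IsMj (complexAt k n t p) k j K C J}

/-- The threshold `p_j`. -/
noncomputable def pjThreshold (k j n : ℕ) : ℝ :=
  ((j + 1 : ℝ) * Real.log n + Real.log (Real.log n)) * (Nat.factorial (k - j)) /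
    (((k - j + 1 : ℕ) : ℝ) * (n : ℝ) ^ (k - j))

/-- `p_j^-`. -/
noncomputable def pjMinus (k j n : ℕ) : ℝ :=
  (1 - 1 / Real.sqrt (Real.log n)) * ((j + 1 : ℝ) * Real.log n) * (Nat.factorial (k - j)) /
    (((k - j + 1 : ℕ) : ℝ) * (n : ℝ) ^ (k - j))

/-- `p_{j-1}^-`. -/
noncomputable def pjPrevMinus (k j n : ℕ) : ℝ :=
  (1 - 1 / Real.sqrt (Real.log n)) * ((j : ℝ) * Real.log n) * (Nat.factorial (k - j + 1)) /
    (((k - j + 2 : ℕ) : ℝ) * (n : ℝ) ^ (k - j + 1))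

/-- `p_j^{(1)}`. -/
noncomputable def pjOne (k j n : ℕ) : ℝ :=
  1 / (10 * ((j : ℝ) + 1) * (Nat.choose (k + 1) (j + 1)) * (n : ℝ) ^ (k - j))

/-- The number of copies of `M_j^-` in `G`. -/
noncomputable def countMjMinus (k j : ℕ) {n : ℕ} (G : Set (Finset (Fin n))) : ℕ :=
  {x : Finset (Fin n) × Finset (Fin n) | IsMjMinus G k j x.1 x.2}.ncard

/-- The number of copies of `M_j^*` in `G`. -/
noncomputable def countMjStar (k j : ℕ) {n : ℕ} (G : Set (Finset (Fin n))) : ℕ :=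
  {x : Finset (Fin n) × Finset (Fin n) × Fin n × Fin n |
    IsMjStar G k j x.1 x.2.1 x.2.2.1 x.2.2.2}.ncard

/-!
Write `r = k - j` and `p₀ = 1 / (n ^ r * ℓ ^ 2)` for a slowly growing `ℓ`. Two properties hold whp
at time `p₀`.

* Some `k`-simplex shares no `j`-simplex with another one. Fix `n ^ r * ℓ ^ 3` many `(k+1)`-sets:
  about `ℓ` of them are born, while the expected number of pairs of a born set from this family and
  a born set meeting it in more than `j` vertices is only `O(1 / ℓ)`.
* Every `(j+1)`-set `S` inside a `(k+1)`-set `K` extends to a shell by an apex outside `K`. A given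
  apex `a` puts all `j+1` sets `insert a (S.erase s)` into the complex with probability of order
  `ℓ ^ (-2 * (j + 1))` at least, independently for linearly many `a`, which beats a union bound over
  the polynomially many pairs `(K, S)`.

The second property is monotone in `p`, so from `p₀` on the shell over any petal turns a copy of
`M_j^-` into a copy of `M_j`; by the first property `p₀ ≤ p_{M_j}`. Since `p ↦ G_p` is
right-continuous, a copy of `M_j^-` in `G_p` with `p_{M_j} ≤ p < 1` would survive slightly beyond
`p` as a copy of `M_j`, contradicting the definition of `p_{M_j}`; for `p ≥ 1` the complex is
complete.
-/

section Combinatorics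

variable {G H : Set (Finset V)} {k j : ℕ} {K C : Finset V}

/-- `G` has a `k`-simplex that shares no `j`-simplex with any other `k`-simplex. -/
def HasIsolatedSimplex [DecidableEq V] (G : Set (Finset V)) (k j : ℕ) : Prop :=
  ∃ K, IsSimplex G k K ∧ ∀ K', IsSimplex G k K' → j < (K ∩ K').card → K' = K

/-- Every `(j+1)`-subset `S` of a `(k+1)`-set `K` can be completed by a vertex `a ∉ K` to a
`(j+2)`-set all of whose `(j+1)`-subsets other than `S` lie in `G`. If `S ∈ G`, this is a
`j`-shell through `S` that leaves `K`. -/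
def HasShellExtensions [DecidableEq V] (G : Set (Finset V)) (k j : ℕ) : Prop :=
  ∀ K : Finset V, K.card = k + 1 → ∀ S ⊆ K, S.card = j + 1 →
    ∃ a ∉ K, ∀ s ∈ S, insert a (S.erase s) ∈ G

theorem HasShellExtensions.mono [DecidableEq V] (hGH : G ⊆ H) (hG : HasShellExtensions G k j) :
    HasShellExtensions H k j := fun K hK S hSK hS ↦
  let ⟨a, haK, ha⟩ := hG K hK S hSK hS
  ⟨a, haK, fun s hs ↦ hGH (ha s hs)⟩

theorem IsMjMinus.exists_mem_sdiff [DecidableEq V] (hjk : j ≤ k) (h : IsMjMinus G k j K C) :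
    ∃ w, w ∈ K \ C := by
  obtain ⟨⟨-, hK⟩, -, hC, hCK, -⟩ := h
  rw [← Finset.Nonempty, ← Finset.card_pos, Finset.card_sdiff_of_subset hCK]
  lia

theorem card_petal [DecidableEq V] {w : V} (hw : w ∈ K \ C) :
    (insert w C).card = C.card + 1 :=
  Finset.card_insert_of_notMem (Finset.mem_sdiff.1 hw).2

theorem petal_subset [DecidableEq V] {w : V} (hCK : C ⊆ K) (hw : w ∈ K \ C) : insert w C ⊆ K :=
  Finset.insert_subset (Finset.mem_sdiff.1 hw).1 hCK

theorem HasIsolatedSimplex.exists_isMjMinus [DecidableEq V] (hG : IsKComplex G k) (hj : 1 ≤ j)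
    (hjk : j ≤ k) (h : HasIsolatedSimplex G k j) : ∃ K C, IsMjMinus G k j K C := by
  obtain ⟨K, hK, hiso⟩ := h
  obtain ⟨C, hCK, hC⟩ := Finset.exists_subset_card_eq (s := K) (n := j) (by have := hK.2; lia)
  refine ⟨K, C, hK, hG.down K hK.1 C hCK (Finset.card_pos.1 (by lia)), hC, hCK, ?_⟩
  rintro _ ⟨w, hw, rfl⟩ K' hK' hPK'
  have hP := Finset.card_le_card (Finset.subset_inter (petal_subset hCK hw) hPK')
  rw [card_petal hw] at hP
  exact hiso K' hK' (by lia)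

theorem HasShellExtensions.exists_isMjStar [DecidableEq V] (hG : IsKComplex G k) (hjk : j ≤ k)
    (hext : HasShellExtensions G k j) (h : IsMjMinus G k j K C) :
    ∃ w a, IsMjStar G k j K C w a := by
  obtain ⟨w, hw⟩ := h.exists_mem_sdiff hjk
  have ⟨hK, _, hC, hCK, _⟩ := h
  have hSK := petal_subset hCK hw
  have hS : (insert w C).card = j + 1 := by rw [card_petal hw, hC]
  obtain ⟨a, haK, ha⟩ := hext K hK.2 _ hSK hS
  have haS : a ∉ insert w C := fun h ↦ haK (hSK h)
  refine ⟨w, a, h, hw, haK, by rw [Finset.card_insert_of_notMem haS, hS], fun τ hτ hτc ↦ ?_⟩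
  have hτne : τ.Nonempty := Finset.card_pos.1 (by lia)
  by_cases haτ : a ∈ τ
  · obtain ⟨s, hs, hsτ⟩ : ∃ s ∈ insert w C, s ∉ τ := by
      by_contra! hSτ
      have := Finset.card_le_card (Finset.insert_subset haτ hSτ)
      rw [Finset.card_insert_of_notMem haS] at this
      lia
    refine hG.down _ (ha s hs) τ ?_ hτne
    rw [← Finset.erase_insert_of_ne (ne_of_mem_of_not_mem haτ hsτ)]
    exact Finset.subset_erase.2 ⟨hτ, hsτ⟩
  · exact hG.down K hK.1 τ (((Finset.subset_insert_iff_of_notMem haτ).1 hτ).trans hSK) hτne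

theorem even_card_filter_powersetCard {A τ : Finset V} (hA : A.card = j + 2) (hτ : τ.card = j) :
    Even ((A.powersetCard (j + 1)).filter (τ ⊆ ·)).card := by
  classical
  by_cases hτA : τ ⊆ A
  · have := Finset.card_filter_powersetCard_subset τ A (j + 1) hτA (by lia)
    rw [hA, hτ, Nat.add_sub_cancel_left, Nat.add_sub_cancel_left, Nat.choose_one_right] at this
    convert! even_two
  · rw [Finset.filter_false_of_mem fun σ hσ hτσ ↦
      hτA (hτσ.trans (Finset.mem_powersetCard.1 hσ).1)]
    exact Even.zero

theorem IsShell.isCycle {A : Finset V} (h : IsShell G j A) :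
    IsCycle G j (A.powersetCard (j + 1)) := by
  refine ⟨fun σ hσ ↦ ?_, fun τ hτ ↦ even_card_filter_powersetCard h.1 hτ⟩
  obtain ⟨hσA, hσ⟩ := Finset.mem_powersetCard.1 hσ
  exact ⟨h.2 σ hσA hσ, hσ⟩

theorem IsMjStar.isMj [DecidableEq V] {w a : V} (h : IsMjStar G k j K C w a) :
    IsMj G k j K C ((insert a (insert w C)).powersetCard (j + 1)) := by
  obtain ⟨hM, hw, haK, hshell⟩ := h
  have hP : (insert w C).card = j + 1 := by rw [card_petal hw, hM.2.2.1]
  refine ⟨hM, hshell.isCycle, insert w C,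
    ⟨Finset.mem_powersetCard.2 ⟨Finset.subset_insert _ _, hP⟩, w, hw, rfl⟩, ?_⟩
  rintro _ ⟨hP', w', hw', rfl⟩
  have hw'A := (Finset.mem_powersetCard.1 hP').1 (Finset.mem_insert_self w' C)
  have ⟨hw'K, hw'C⟩ := Finset.mem_sdiff.1 hw'
  have hw'a : w' ≠ a := ne_of_mem_of_not_mem hw'K haK
  obtain rfl : w' = w := by simpa [hw'a, hw'C] using hw'A
  rfl

theorem not_isMjMinus_of_complete [DecidableEq V] [Fintype V] (hV : k + 1 < Fintype.card V)
    (hjk : j < k) (hG : ∀ K : Finset V, K.card = k + 1 → K ∈ G) : ¬ IsMjMinus G k j K C := by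
  intro h
  obtain ⟨w, hw⟩ := h.exists_mem_sdiff hjk.le
  obtain ⟨⟨_, hK⟩, _, hC, hCK, huniq⟩ := h
  obtain ⟨u, hu⟩ : (K \ insert w C).Nonempty := by
    rw [← Finset.card_pos, Finset.card_sdiff_of_subset (petal_subset hCK hw), card_petal hw]
    lia
  have ⟨huK, huP⟩ := Finset.mem_sdiff.1 hu
  obtain ⟨v, hv⟩ : ∃ v, v ∉ K := by
    by_contra! hK'
    rw [Finset.eq_univ_of_forall hK', Finset.card_univ] at hK
    lia
  have hvK' : v ∉ K.erase u := fun h ↦ hv (Finset.mem_of_mem_erase h)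
  have hK'c : (insert v (K.erase u)).card = k + 1 := by
    rw [Finset.card_insert_of_notMem hvK', Finset.card_erase_add_one huK, hK]
  have hPK' : insert w C ⊆ insert v (K.erase u) :=
    (Finset.subset_erase.2 ⟨petal_subset hCK hw, huP⟩).trans (Finset.subset_insert _ _)
  have hK'K := huniq _ ⟨w, hw, rfl⟩ _ ⟨hG _ hK'c, hK'c⟩ hPK'
  exact hv (hK'K ▸ Finset.mem_insert_self _ _)

end Combinatorics

section BirthTimes

variable {k j n : ℕ} {t : Finset (Fin n) → ℝ} {p q : ℝ} {K C : Finset (Fin n)}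

theorem complexAt_isKComplex (k n : ℕ) (t : Finset (Fin n) → ℝ) (p : ℝ) :
    IsKComplex (complexAt k n t p) k where
  down := by
    rintro A (⟨v, rfl⟩ | ⟨-, K, hK, htK, hAK⟩) B hBA hB
    · exact .inl ⟨v, hB.subset_singleton_iff.1 hBA⟩
    · exact .inr ⟨hB, K, hK, htK, hBA.trans hAK⟩
  singletons v := .inl ⟨v, rfl⟩
  dim := by
    rintro A (⟨v, rfl⟩ | ⟨-, K, hK, -, hAK⟩)
    · simp
    · exact hK ▸ Finset.card_le_card hAK

theorem complexAt_mono (hpq : p ≤ q) : complexAt k n t p ⊆ complexAt k n t q := by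
  rintro A (hA | ⟨hA, K, hK, htK, hAK⟩)
  · exact .inl hA
  · exact .inr ⟨hA, K, hK, htK.trans hpq, hAK⟩

theorem subset_mem_complexAt {A : Finset (Fin n)} (hA : A.Nonempty) (hAK : A ⊆ K)
    (hK : K.card = k + 1) (htK : t K ≤ p) : A ∈ complexAt k n t p :=
  .inr ⟨hA, K, hK, htK, hAK⟩

theorem isSimplex_complexAt_iff (hk : 1 ≤ k) :
    IsSimplex (complexAt k n t p) k K ↔ K.card = k + 1 ∧ t K ≤ p := by
  constructor
  · rintro ⟨⟨v, rfl⟩ | ⟨-, K', hK', htK', hKK'⟩, hK⟩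
    · rw [Finset.card_singleton] at hK
      lia
    · obtain rfl := Finset.eq_of_subset_of_card_le hKK' (by lia)
      exact ⟨hK, htK'⟩
  · rintro ⟨hK, htK⟩
    exact ⟨subset_mem_complexAt (Finset.card_pos.1 (by lia)) subset_rfl hK htK, hK⟩

theorem eventually_complexAt_eq (k : ℕ) (t : Finset (Fin n) → ℝ) (p : ℝ) :
    ∀ᶠ q in nhdsWithin p (Set.Ioi p), complexAt k n t q = complexAt k n t p := by
  have hborn : ∀ᶠ q in nhdsWithin p (Set.Ioi p), ∀ K, t K ≤ q ↔ t K ≤ p := by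
    refine eventually_all.2 fun K ↦ ?_
    rcases le_or_gt (t K) p with hK | hK
    · filter_upwards [self_mem_nhdsWithin] with q hq
      exact iff_of_true (hK.trans (Set.mem_Ioi.1 hq).le) hK
    · filter_upwards [Ioo_mem_nhdsGT hK] with q hq
      exact iff_of_false hq.2.not_ge hK.not_ge
  filter_upwards [hborn] with q hq
  simp only [complexAt, hq]

theorem le_pMj {J : Finset (Finset (Fin n))} (hp : p ∈ Set.Icc (0 : ℝ) 1)
    (h : IsMj (complexAt k n t p) k j K C J) : p ≤ pMj k j n t :=
  le_csSup ⟨1, fun _ hq ↦ hq.1.2⟩ ⟨hp, K, C, J, h⟩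

theorem lt_pMj {J : Finset (Finset (Fin n))} (hp0 : 0 ≤ p) (hp1 : p < 1)
    (h : IsMj (complexAt k n t p) k j K C J) : p < pMj k j n t := by
  obtain ⟨q, hGq, hpq, hq1⟩ :=
    ((eventually_complexAt_eq k t p).and (Ioo_mem_nhdsGT hp1)).exists
  exact hpq.trans_le (le_pMj ⟨hp0.trans hpq.le, hq1.le⟩ (hGq ▸ h))

theorem not_isMjMinus_of_pMj_le (hj : 1 ≤ j) (hjk : j < k) (hn : k + 1 < n)
    {p₀ : ℝ} (hp₀ : p₀ ∈ Set.Icc (0 : ℝ) 1) (ht : ∀ K, t K ≤ 1)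
    (hiso : HasIsolatedSimplex (complexAt k n t p₀) k j)
    (hext : HasShellExtensions (complexAt k n t p₀) k j) (hp : pMj k j n t ≤ p) :
    ¬ IsMjMinus (complexAt k n t p) k j K C := by
  have exists_isMj {q : ℝ} (hq : p₀ ≤ q) {K C} (h : IsMjMinus (complexAt k n t q) k j K C) :
      ∃ J, IsMj (complexAt k n t q) k j K C J :=
    let ⟨_, _, hstar⟩ := (hext.mono (complexAt_mono hq)).exists_isMjStar
      (complexAt_isKComplex k n t q) hjk.le h
    ⟨_, hstar.isMj⟩
  have hp₀p : p₀ ≤ p := by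
    obtain ⟨K, C, h⟩ := hiso.exists_isMjMinus (complexAt_isKComplex k n t p₀) hj hjk.le
    obtain ⟨J, hJ⟩ := exists_isMj le_rfl h
    exact (le_pMj hp₀ hJ).trans hp
  rcases lt_or_ge p 1 with hp1 | hp1
  · intro h
    obtain ⟨J, hJ⟩ := exists_isMj hp₀p h
    exact (lt_pMj (hp₀.1.trans hp₀p) hp1 hJ).not_ge hp
  · refine not_isMjMinus_of_complete (by rwa [Fintype.card_fin]) hjk fun K hK ↦ ?_
    exact ((isSimplex_complexAt_iff (by lia)).2 ⟨hK, (ht K).trans hp1⟩).1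

end BirthTimes

section Independence

open ProbabilityTheory

variable {Ω ι α β γ : Type*} [MeasurableSpace Ω] {μ : Measure Ω} {E : ι → Set Ω} {q c : ℝ}

theorem iIndepSet_preimage {X : ι → Ω → α} [MeasurableSpace α] (hX : iIndepFun X μ)
    {s : ι → Set α} (hs : ∀ i, MeasurableSet (s i)) : iIndepSet (fun i ↦ X i ⁻¹' s i) μ :=
  iIndep_comap_mem_iff.1 <| hX.comp (fun i x ↦ x ∈ s i) fun i ↦ measurable_mem.2 (hs i)

theorem iIndepSet_compl (hE : iIndepSet E μ) : iIndepSet (fun i ↦ (E i)ᶜ) μ :=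
  iIndep_comap_mem_iff.1 <|
    iIndepFun.comp (f := fun i ω ↦ ω ∈ E i) hE.iIndep_comap_mem (fun _ ↦ Not) fun _ ↦ .of_discrete

theorem iIndepSet_iInter [Finite β] {E : α × β → Set Ω} (hE : iIndepSet E μ)
    (hm : ∀ i, MeasurableSet (E i)) : iIndepSet (fun a ↦ ⋂ b, E (a, b)) μ := by
  have := Fintype.ofFinite β
  refine (iIndepSet_iff_meas_biInter fun a ↦ .iInter fun b ↦ hm (a, b)).2 fun T ↦ ?_
  have hprod (U : Finset α) : μ (⋂ a ∈ U, ⋂ b, E (a, b)) = ∏ a ∈ U, ∏ b, μ (E (a, b)) := by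
    rw [← Finset.prod_product', ← hE.meas_biInter]
    congr 1
    ext ω
    simp only [Set.mem_iInter, Finset.mem_product, Finset.mem_univ, and_true, Prod.forall]
    tauto
  rw [hprod]
  exact Finset.prod_congr rfl fun a _ ↦ by simpa using (hprod {a}).symm

theorem measureReal_biInter_eq_pow (hE : iIndepSet E μ) (hq : ∀ i, μ.real (E i) = q)
    (s : Finset ι) : μ.real (⋂ i ∈ s, E i) = q ^ s.card := by
  rw [measureReal_def, hE.meas_biInter, ENNReal.toReal_prod]
  exact Finset.prod_eq_pow_card fun i _ ↦ hq i

theorem measureReal_iInter_eq_pow [Fintype ι] (hE : iIndepSet E μ) (hq : ∀ i, μ.real (E i) = q) :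
    μ.real (⋂ i, E i) = q ^ Fintype.card ι := by
  simpa using measureReal_biInter_eq_pow hE hq Finset.univ

theorem measureReal_compl_iInter_eq [IsProbabilityMeasure μ] [Fintype ι] (hE : iIndepSet E μ)
    (hm : ∀ i, MeasurableSet (E i)) (hq : ∀ i, μ.real (E i) = q) :
    μ.real (⋂ i, E i)ᶜ = 1 - q ^ Fintype.card ι := by
  rw [probReal_compl_eq_one_sub (.iInter hm), measureReal_iInter_eq_pow hE hq]

theorem measureReal_iInter_iUnion_iInter [IsProbabilityMeasure μ] [Fintype α] [Fintype β]
    [Fintype γ] {E : (α × β) × γ → Set Ω} (hE : iIndepSet E μ) (hm : ∀ i, MeasurableSet (E i))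
    (hq : ∀ i, μ.real (E i) = q) :
    μ.real (⋂ a, ⋃ b, ⋂ c, E ((a, b), c)) =
      (1 - (1 - q ^ Fintype.card γ) ^ Fintype.card β) ^ Fintype.card α := by
  simp_rw [Set.iUnion_eq_compl_iInter_compl]
  have hF : iIndepSet (fun i : α × β ↦ (⋂ c, E (i, c))ᶜ) μ :=
    iIndepSet_compl (iIndepSet_iInter hE hm)
  have hFm (i : α × β) : MeasurableSet (⋂ c, E (i, c))ᶜ := (MeasurableSet.iInter fun c ↦ hm _).compl
  have hFq (i : α × β) : μ.real (⋂ c, E (i, c))ᶜ = 1 - q ^ Fintype.card γ :=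
    measureReal_compl_iInter_eq (hE.precomp (Prod.mk_right_injective i)) (fun c ↦ hm (i, c))
      fun c ↦ hq (i, c)
  refine measureReal_iInter_eq_pow (iIndepSet_compl (iIndepSet_iInter hF hFm)) fun a ↦ ?_
  have hFa : iIndepSet (fun b ↦ (⋂ c, E ((a, b), c))ᶜ) μ :=
    (hF.precomp (Prod.mk_right_injective a) :)
  exact measureReal_compl_iInter_eq hFa (fun b ↦ hFm (a, b)) fun b ↦ hFq (a, b)

theorem measureReal_biUnion_le_card_mul {s : Finset ι} (hc : ∀ i ∈ s, μ.real (E i) ≤ c) :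
    μ.real (⋃ i ∈ s, E i) ≤ s.card * c :=
  (measureReal_biUnion_finset_le s E).trans <|
    (Finset.sum_le_card_nsmul s _ c hc).trans_eq (nsmul_eq_mul _ _)

theorem tendsto_measure_one_of_ae_mem_or_mem {Ω : ℕ → Type*} [∀ n, MeasurableSpace (Ω n)]
    {μ : ∀ n, Measure (Ω n)} [∀ n, IsProbabilityMeasure (μ n)] {A B : ∀ n, Set (Ω n)}
    (hAB : ∀ᶠ n in atTop, ∀ᵐ ω ∂μ n, ω ∈ B n ∨ ω ∈ A n)
    (hB : Tendsto (fun n ↦ (μ n).real (B n)) atTop (nhds 0)) :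
    Tendsto (fun n ↦ μ n (A n)) atTop (nhds 1) := by
  have hlower : Tendsto (fun n ↦ 1 - μ n (B n)) atTop (nhds 1) := by
    have : Tendsto (fun n ↦ μ n (B n)) atTop (nhds 0) := by
      simpa using ENNReal.tendsto_ofReal hB
    simpa using ENNReal.Tendsto.sub tendsto_const_nhds this (.inl ENNReal.one_ne_top)
  refine tendsto_of_tendsto_of_tendsto_of_le_of_le' hlower tendsto_const_nhds ?_
    (.of_forall fun n ↦ prob_le_one)
  filter_upwards [hAB] with n hn
  rw [tsub_le_iff_left, ← measure_univ (μ := μ n)]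
  have : (Set.univ : Set (Ω n)) ≤ᵐ[μ n] (B n ∪ A n : Set _) := hn.mono fun ω h _ ↦ h
  exact (measure_mono_ae this).trans (measure_union_le _ _)

end Independence

section BirthMeasure

open ProbabilityTheory

variable {k j n : ℕ} {p : ℝ}

instance isProbabilityMeasure_volume_restrict_Icc :
    IsProbabilityMeasure (volume.restrict (Set.Icc (0 : ℝ) 1)) :=
  ⟨by simp⟩

instance isProbabilityMeasure_birthMeasure : IsProbabilityMeasure (birthMeasure n) :=
  inferInstanceAs (IsProbabilityMeasure (Measure.pi _))

theorem measurableSet_birth_le (p : ℝ) (K : Finset (Fin n)) :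
    MeasurableSet {t : Finset (Fin n) → ℝ | t K ≤ p} :=
  measurable_pi_apply K measurableSet_Iic

theorem measurableSet_lt_birth (p : ℝ) (K : Finset (Fin n)) :
    MeasurableSet {t : Finset (Fin n) → ℝ | p < t K} :=
  measurable_pi_apply K measurableSet_Ioi

theorem measureReal_birth_le (hp : p ∈ Set.Icc (0 : ℝ) 1) (K : Finset (Fin n)) :
    (birthMeasure n).real {t | t K ≤ p} = p := by
  have hK := (measurePreserving_eval (fun _ : Finset (Fin n) ↦
    volume.restrict (Set.Icc (0 : ℝ) 1)) K).measureReal_preimage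
      (measurableSet_Iic (a := p)).nullMeasurableSet
  have hIcc : Set.Iic p ∩ Set.Icc (0 : ℝ) 1 = Set.Icc 0 p := by
    rw [Set.inter_comm, ← Set.Ici_inter_Iic, Set.inter_assoc, Set.Iic_inter_Iic,
      min_eq_right hp.2, Set.Ici_inter_Iic]
  rw [measureReal_restrict_apply measurableSet_Iic, hIcc, Real.volume_real_Icc_of_le hp.1,
    sub_zero] at hK
  exact hK

theorem measureReal_lt_birth (hp : p ∈ Set.Icc (0 : ℝ) 1) (K : Finset (Fin n)) :
    (birthMeasure n).real {t | p < t K} = 1 - p := by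
  simpa only [Set.compl_ofPred, not_le, measureReal_birth_le hp] using
    probReal_compl_eq_one_sub (μ := birthMeasure n) (measurableSet_birth_le p K)

theorem ae_birth_le_one (n : ℕ) : ∀ᵐ t ∂birthMeasure n, ∀ K, t K ≤ 1 := by
  refine ae_all_iff.2 fun K ↦ ?_
  have := measureReal_lt_birth (Set.right_mem_Icc.2 zero_le_one) K
  rw [sub_self, measureReal_eq_zero_iff] at this
  simpa only [ae_iff, not_le] using this

theorem iIndepFun_birth (n : ℕ) : iIndepFun (fun K t ↦ t K) (birthMeasure n) :=
  iIndepFun_pi (X := fun _ ↦ id) fun _ ↦ aemeasurable_id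

theorem iIndepSet_lt_birth (p : ℝ) :
    iIndepSet (fun K ↦ {t : Finset (Fin n) → ℝ | p < t K}) (birthMeasure n) :=
  iIndepSet_preimage (iIndepFun_birth n) fun _ ↦ measurableSet_Ioi

theorem measureReal_birth_le_inter (hp : p ∈ Set.Icc (0 : ℝ) 1) {K K' : Finset (Fin n)}
    (hKK' : K ≠ K') : (birthMeasure n).real ({t | t K ≤ p} ∩ {t | t K' ≤ p}) = p ^ 2 := by
  have hmul := ((iIndepFun_birth n).indepFun hKK').measure_inter_preimage_eq_mul _ _
    (measurableSet_Iic (a := p)) (measurableSet_Iic (a := p))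
  calc (birthMeasure n).real ({t | t K ≤ p} ∩ {t | t K' ≤ p})
      = (birthMeasure n).real {t | t K ≤ p} * (birthMeasure n).real {t | t K' ≤ p} :=
        (congrArg ENNReal.toReal hmul).trans ENNReal.toReal_mul
    _ = p ^ 2 := by rw [measureReal_birth_le hp, measureReal_birth_le hp, sq]

theorem card_filter_lt_card_inter_le [Fintype V] [DecidableEq V] (K : Finset V) (k j : ℕ) :
    ((Finset.powersetCard (k + 1) Finset.univ).filter (fun K' ↦ j < (K ∩ K').card)).card ≤
      2 ^ K.card * Fintype.card V ^ (k - j) := by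
  have hsub : (Finset.powersetCard (k + 1) Finset.univ).filter (fun K' ↦ j < (K ∩ K').card) ⊆
      (K.powerset ×ˢ Finset.univ.powersetCard (k - j)).image fun x ↦ x.1 ∪ x.2 := by
    intro K' hK'
    obtain ⟨hK', hj⟩ := Finset.mem_filter.1 hK'
    obtain ⟨P, hP, hPc⟩ := Finset.exists_subset_card_eq (Nat.succ_le_of_lt hj)
    obtain ⟨hPK, hPK'⟩ := Finset.subset_inter_iff.1 hP
    refine Finset.mem_image.2 ⟨(P, K' \ P), Finset.mem_product.2 ⟨Finset.mem_powerset.2 hPK, ?_⟩,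
      Finset.union_sdiff_of_subset hPK'⟩
    rw [Finset.mem_powersetCard_univ, Finset.card_sdiff_of_subset hPK', hPc,
      Finset.mem_powersetCard_univ.1 hK', Nat.succ_eq_add_one, Nat.add_sub_add_right]
  refine (Finset.card_le_card hsub).trans (Finset.card_image_le.trans ?_)
  rw [Finset.card_product, Finset.card_powerset, Finset.card_powersetCard, Finset.card_univ]
  exact Nat.mul_le_mul_left _ (Nat.choose_le_pow _ _)

theorem measureReal_exists_near_birth_le (hp : p ∈ Set.Icc (0 : ℝ) 1) {K : Finset (Fin n)}
    (hK : K.card = k + 1) :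
    (birthMeasure n).real {t | t K ≤ p ∧
        ∃ K' : Finset (Fin n), K'.card = k + 1 ∧ j < (K ∩ K').card ∧ K' ≠ K ∧ t K' ≤ p} ≤
      2 ^ (k + 1) * n ^ (k - j) * p ^ 2 := by
  let near : Finset (Finset (Fin n)) :=
    ((Finset.powersetCard (k + 1) Finset.univ).filter fun K' ↦ j < (K ∩ K').card).erase K
  have hcard : near.card ≤ 2 ^ (k + 1) * n ^ (k - j) := by
    have := card_filter_lt_card_inter_le K k j
    rw [hK, Fintype.card_fin] at this
    exact Finset.card_erase_le.trans this
  have hsub : {t : Finset (Fin n) → ℝ | t K ≤ p ∧ ∃ K',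
        K'.card = k + 1 ∧ j < (K ∩ K').card ∧ K' ≠ K ∧ t K' ≤ p} ⊆
      ⋃ K' ∈ near, {t | t K ≤ p} ∩ {t | t K' ≤ p} := by
    rintro t ⟨htK, K', hK', hj, hne, htK'⟩
    exact Set.mem_biUnion (Finset.mem_erase.2 ⟨hne, Finset.mem_filter.2
      ⟨Finset.mem_powersetCard_univ.2 hK', hj⟩⟩) ⟨htK, htK'⟩
  calc _ ≤ _ := measureReal_mono hsub (measure_ne_top _ _)
    _ ≤ near.card * p ^ 2 := measureReal_biUnion_le_card_mul fun K' hK' ↦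
      (measureReal_birth_le_inter hp (Finset.ne_of_mem_erase hK').symm).le
    _ ≤ _ := by gcongr; exact_mod_cast hcard

theorem measureReal_not_hasIsolatedSimplex_le {m : ℕ} (hk : 1 ≤ k) (hm : m ≤ n.choose (k + 1))
    (hp : p ∈ Set.Icc (0 : ℝ) 1) :
    (birthMeasure n).real {t | ¬ HasIsolatedSimplex (complexAt k n t p) k j} ≤
      (1 - p) ^ m + m * (2 ^ (k + 1) * n ^ (k - j) * p ^ 2) := by
  obtain ⟨B, hB, hBm⟩ := Finset.exists_subset_card_eq
    (s := Finset.powersetCard (k + 1) (Finset.univ : Finset (Fin n))) (n := m) (by simpa using hm)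
  have hBcard {K} (hK : K ∈ B) : K.card = k + 1 := Finset.mem_powersetCard_univ.1 (hB hK)
  have hsub : {t | ¬ HasIsolatedSimplex (complexAt k n t p) k j} ⊆
      (⋂ K ∈ B, {t | p < t K}) ∪ ⋃ K ∈ B, {t | t K ≤ p ∧
        ∃ K' : Finset (Fin n), K'.card = k + 1 ∧ j < (K ∩ K').card ∧ K' ≠ K ∧ t K' ≤ p} := by
    intro t ht
    by_contra! hcon
    simp only [Set.mem_union, Set.mem_iInter, Set.mem_iUnion, Set.mem_ofPred_eq, not_or,
      not_forall, not_exists, not_and, not_lt, exists_prop] at hcon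
    obtain ⟨⟨K, hKB, htK⟩, hfar⟩ := hcon
    refine ht ⟨K, (isSimplex_complexAt_iff hk).2 ⟨hBcard hKB, htK⟩, fun K' hK' hj ↦ ?_⟩
    obtain ⟨hK', htK'⟩ := (isSimplex_complexAt_iff hk).1 hK'
    by_contra hne
    exact hfar K hKB htK K' hK' hj hne htK'
  calc _ ≤ _ := measureReal_mono hsub
    _ ≤ _ := measureReal_union_le _ _
    _ ≤ _ := by
      rw [measureReal_biInter_eq_pow (iIndepSet_lt_birth p) (measureReal_lt_birth hp), ← hBm]
      gcongr
      exact measureReal_biUnion_le_card_mul fun K hK ↦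
        measureReal_exists_near_birth_le hp (hBcard hK)

theorem card_insert_erase_union [DecidableEq V] {S A R Q : Finset V} {a s : V}
    (hSA : Disjoint S A) (hSR : Disjoint S R) (hAR : Disjoint A R) (ha : a ∈ A) (hs : s ∈ S)
    (hQ : Q ⊆ R) : (insert a (S.erase s) ∪ Q).card = S.card + Q.card := by
  have haS : a ∉ S.erase s := fun h ↦ Finset.disjoint_left.1 hSA (Finset.mem_of_mem_erase h) ha
  have hdisj : Disjoint (insert a (S.erase s)) Q := Finset.disjoint_insert_left.2
    ⟨fun h ↦ Finset.disjoint_left.1 hAR ha (hQ h), hSR.mono (Finset.erase_subset _ _) hQ⟩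
  rw [Finset.card_union_of_disjoint hdisj, Finset.card_insert_of_notMem haS,
    Finset.card_erase_add_one hs]

theorem injective_insert_erase_union [DecidableEq V] {S A R : Finset V} (hSA : Disjoint S A)
    (hSR : Disjoint S R) (hAR : Disjoint A R) (r : ℕ) :
    Function.Injective fun x : (A × S) × R.powersetCard r ↦
      insert x.1.1.1 (S.erase x.1.2) ∪ x.2 := by
  have recover {a s : V} {Q : Finset V} (ha : a ∈ A) (hs : s ∈ S) (hQ : Q ∈ R.powersetCard r) :
      let T := insert a (S.erase s) ∪ Q
      T ∩ A = {a} ∧ S \ T = {s} ∧ T ∩ R = Q := by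
    have hQR := (Finset.mem_powersetCard.1 hQ).1
    rw [Finset.disjoint_left] at hSA hSR hAR
    refine ⟨?_, ?_, ?_⟩ <;> ext v <;> grind
  rintro ⟨⟨⟨a, ha⟩, ⟨s, hs⟩⟩, ⟨Q, hQ⟩⟩ ⟨⟨⟨a', ha'⟩, ⟨s', hs'⟩⟩, ⟨Q', hQ'⟩⟩ heq
  obtain ⟨hA, hS, hR⟩ := recover ha hs hQ
  obtain ⟨hA', hS', hR'⟩ := recover ha' hs' hQ'
  simp only at heq
  rw [heq] at hA hS hR
  obtain rfl := Finset.singleton_injective (hA.symm.trans hA')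
  obtain rfl := Finset.singleton_injective (hS.symm.trans hS')
  obtain rfl := hR.symm.trans hR'
  rfl

theorem exists_disjoint_subsets_card_eq {s : Finset V} {h : ℕ} (hs : 2 * h ≤ s.card) :
    ∃ A R, A ⊆ s ∧ R ⊆ s ∧ Disjoint A R ∧ A.card = h ∧ R.card = h := by
  classical
  obtain ⟨A, hA, hAc⟩ := Finset.exists_subset_card_eq (s := s) (n := h) (by lia)
  obtain ⟨R, hR, hRc⟩ := Finset.exists_subset_card_eq (s := s \ A) (n := h) (by
    rw [Finset.card_sdiff_of_subset hA]; lia)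
  exact ⟨A, R, hA, hR.trans Finset.sdiff_subset, Finset.disjoint_sdiff.mono_right hR, hAc, hRc⟩

theorem measureReal_not_exists_shellExtension_le {h : ℕ} (hjk : j ≤ k) (hn : 2 * h + (k + 1) ≤ n)
    (hp : p ∈ Set.Icc (0 : ℝ) 1) {K S : Finset (Fin n)} (hK : K.card = k + 1) (hSK : S ⊆ K)
    (hS : S.card = j + 1) :
    (birthMeasure n).real
        {t | ¬ ∃ a ∉ K, ∀ s ∈ S, insert a (S.erase s) ∈ complexAt k n t p} ≤
      (1 - (1 - (1 - p) ^ h.choose (k - j)) ^ (j + 1)) ^ h := by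
  obtain ⟨A, R, hA, hR, hAR, hAc, hRc⟩ := exists_disjoint_subsets_card_eq (s := Kᶜ) (h := h)
    (by rw [Finset.card_compl, Fintype.card_fin, hK]; lia)
  have hSA : Disjoint S A := disjoint_compl_right.mono hSK hA
  have hSR : Disjoint S R := disjoint_compl_right.mono hSK hR
  -- `T ((a, s), Q)` is a `k`-simplex that would put `insert a (S.erase s)` into the complex;
  -- distinct triples give distinct sets, so the births of all these sets are independent.
  let T (x : (A × S) × R.powersetCard (k - j)) : Finset (Fin n) :=
    insert x.1.1.1 (S.erase x.1.2) ∪ x.2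
  have hTcard (x) : (T x).card = k + 1 := by
    obtain ⟨hQR, hQc⟩ := Finset.mem_powersetCard.1 x.2.2
    rw [card_insert_erase_union hSA hSR hAR x.1.1.2 x.1.2.2 hQR]
    lia
  have hindep : iIndepSet (fun x ↦ {t | p < t (T x)}) (birthMeasure n) :=
    (iIndepSet_lt_birth p).precomp (injective_insert_erase_union hSA hSR hAR (k - j))
  have hsub : {t | ¬ ∃ a ∉ K, ∀ s ∈ S, insert a (S.erase s) ∈ complexAt k n t p} ⊆
      ⋂ a, ⋃ s, ⋂ Q, {t | p < t (T ((a, s), Q))} := by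
    intro t ht
    simp only [Set.mem_iInter, Set.mem_iUnion, Set.mem_ofPred_eq]
    by_contra! hborn
    obtain ⟨a, ha⟩ := hborn
    refine ht ⟨a, Finset.mem_compl.1 (hA a.2), fun s hs ↦ ?_⟩
    obtain ⟨Q, hQ⟩ := ha ⟨s, hs⟩
    exact subset_mem_complexAt (Finset.insert_nonempty _ _) Finset.subset_union_left (hTcard _) hQ
  have hprob := measureReal_iInter_iUnion_iInter hindep (fun _ ↦ measurableSet_lt_birth p _)
    fun _ ↦ measureReal_lt_birth hp _
  simp only [Fintype.card_coe, Finset.card_powersetCard, hAc, hRc, hS] at hprob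
  exact (measureReal_mono hsub).trans_eq hprob

theorem measureReal_not_hasShellExtensions_le {h : ℕ} (hjk : j ≤ k) (hn : 2 * h + (k + 1) ≤ n)
    (hp : p ∈ Set.Icc (0 : ℝ) 1) :
    (birthMeasure n).real {t | ¬ HasShellExtensions (complexAt k n t p) k j} ≤
      n ^ (k + 1) * ((k + 1).choose (j + 1) *
        (1 - (1 - (1 - p) ^ h.choose (k - j)) ^ (j + 1)) ^ h) := by
  have hsub : {t | ¬ HasShellExtensions (complexAt k n t p) k j} ⊆
      ⋃ K ∈ Finset.univ.powersetCard (k + 1), ⋃ S ∈ K.powersetCard (j + 1),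
        {t | ¬ ∃ a ∉ K, ∀ s ∈ S, insert a (S.erase s) ∈ complexAt k n t p} := by
    intro t ht
    simp only [HasShellExtensions, Set.mem_ofPred_eq, not_forall, exists_prop] at ht
    obtain ⟨K, hK, S, hSK, hS, hKS⟩ := ht
    exact Set.mem_biUnion (Finset.mem_powersetCard_univ.2 hK)
      (Set.mem_biUnion (Finset.mem_powersetCard.2 ⟨hSK, hS⟩) hKS)
  set c := (1 - (1 - (1 - p) ^ h.choose (k - j)) ^ (j + 1)) ^ h
  have hc0 : 0 ≤ c := by
    have hp1 : 0 ≤ 1 - p := sub_nonneg.2 hp.2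
    have hpow : (1 - p) ^ h.choose (k - j) ≤ 1 := pow_le_one₀ hp1 (sub_le_self 1 hp.1)
    refine pow_nonneg (sub_nonneg.2 (pow_le_one₀ (sub_nonneg.2 hpow) ?_)) h
    exact sub_le_self 1 (pow_nonneg hp1 _)
  have hK : ∀ K ∈ Finset.univ.powersetCard (k + 1), (birthMeasure n).real
      (⋃ S ∈ K.powersetCard (j + 1),
        {t | ¬ ∃ a ∉ K, ∀ s ∈ S, insert a (S.erase s) ∈ complexAt k n t p}) ≤
      (k + 1).choose (j + 1) * c := fun K hK ↦ by
    have hK := Finset.mem_powersetCard_univ.1 hK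
    rw [← hK, ← Finset.card_powersetCard]
    refine measureReal_biUnion_le_card_mul fun S hS ↦ ?_
    obtain ⟨hSK, hS⟩ := Finset.mem_powersetCard.1 hS
    exact measureReal_not_exists_shellExtension_le hjk hn hp hK hSK hS
  calc _ ≤ _ := measureReal_mono hsub (measure_ne_top _ _)
    _ ≤ _ := measureReal_biUnion_le_card_mul hK
    _ ≤ _ := by
      rw [Finset.card_powersetCard, Finset.card_univ, Fintype.card_fin]
      gcongr
      exact_mod_cast Nat.choose_le_pow _ _

end BirthMeasure

section Asymptotics

open Asymptotics

variable {k j r : ℕ} {ℓ : ℕ → ℕ}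

theorem one_sub_pow_le_exp_neg_mul {x : ℝ} (hx : x ≤ 1) (m : ℕ) :
    (1 - x) ^ m ≤ Real.exp (-(m * x)) := by
  rw [← mul_neg, Real.exp_nat_mul]
  exact pow_le_pow_left₀ (sub_nonneg.2 hx) (Real.one_sub_le_exp_neg x) m

theorem div_one_add_le_one_sub_exp_neg {x : ℝ} (hx : 0 ≤ x) :
    x / (1 + x) ≤ 1 - Real.exp (-x) := by
  rw [Real.exp_neg, le_sub_comm, one_sub_div (by positivity), add_sub_cancel_right, one_div,
    add_comm]
  exact inv_anti₀ (by positivity) (Real.add_one_le_exp x)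

theorem tendsto_pow_mul_exp_neg_mul_sqrt (N : ℕ) {b : ℝ} (hb : 0 < b) :
    Tendsto (fun n : ℕ ↦ (n : ℝ) ^ N * Real.exp (-b * Real.sqrt n)) atTop (nhds 0) := by
  have h := (tendsto_rpow_mul_exp_neg_mul_atTop_nhds_zero (2 * N : ℕ) b hb).comp
    (Real.tendsto_sqrt_atTop.comp tendsto_natCast_atTop_atTop)
  refine h.congr fun n ↦ ?_
  simp only [Function.comp_apply, Real.rpow_natCast, pow_mul, Real.sq_sqrt n.cast_nonneg]

theorem eventually_pow_le_choose (k : ℕ) : ∀ᶠ n : ℕ in atTop, n ^ k ≤ n.choose (k + 1) := by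
  have h : (fun n : ℕ ↦ (n : ℝ) ^ k) =o[atTop] fun n : ℕ ↦ (n.choose (k + 1) : ℝ) :=
    ((isLittleO_pow_pow_atTop_of_lt k.lt_succ_self).comp_tendsto
      tendsto_natCast_atTop_atTop).trans_isBigO (isTheta_choose (k + 1)).isBigO_symm
  filter_upwards [h.bound one_pos] with n hn
  rw [one_mul, Real.norm_of_nonneg (by positivity), Real.norm_of_nonneg (by positivity)] at hn
  exact_mod_cast hn

theorem exists_mul_pow_le_choose_div_four (r : ℕ) :
    ∃ c > 0, ∀ᶠ n : ℕ in atTop, c * (n : ℝ) ^ r ≤ (n / 4).choose r := by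
  obtain ⟨C, hC, h⟩ := ((isTheta_choose r).isBigO_symm.comp_tendsto
    (Nat.tendsto_div_const_atTop four_ne_zero)).exists_pos
  refine ⟨(C * 8 ^ r)⁻¹, by positivity, ?_⟩
  filter_upwards [h.bound, eventually_ge_atTop 4] with n hn h4
  simp only [Function.comp_apply, Real.norm_of_nonneg, Nat.cast_nonneg, pow_nonneg] at hn
  have h8 : (n : ℝ) ≤ 8 * (n / 4 : ℕ) := by exact_mod_cast (by lia : n ≤ 8 * (n / 4))
  rw [inv_mul_le_iff₀ (by positivity)]
  calc (n : ℝ) ^ r ≤ (8 * (n / 4 : ℕ)) ^ r := by gcongr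
    _ = 8 ^ r * ((n / 4 : ℕ) : ℝ) ^ r := mul_pow _ _ _
    _ ≤ 8 ^ r * (C * (n / 4).choose r) := by gcongr
    _ = C * 8 ^ r * (n / 4).choose r := by ring

theorem exists_tendsto_atTop_pow_le (hr : r ≠ 0) :
    ∃ ℓ : ℕ → ℕ, Tendsto ℓ atTop atTop ∧ ∀ n, ℓ n ^ r ≤ n :=
  ⟨Nat.nthRoot r, tendsto_atTop.2 fun a ↦ (eventually_ge_atTop (a ^ r)).mono fun _ ↦
    (Nat.le_nthRoot_iff hr).2, fun _ ↦ Nat.pow_nthRoot_le (.inl hr)⟩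

/-- The birth time `1 / (n ^ r * ℓ ^ 2)`, for a slowly growing integer `ℓ` and `r = k - j`. Since a
`j`-simplex lies in about `n ^ r` potential `k`-simplices, at this time the complex is sparse, yet
only by a factor `ℓ ^ 2`. -/
noncomputable def sparseTime (r n ℓ : ℕ) : ℝ := ((n ^ r * ℓ ^ 2 : ℕ) : ℝ)⁻¹

theorem sparseTime_mem_Icc (r n ℓ : ℕ) : sparseTime r n ℓ ∈ Set.Icc (0 : ℝ) 1 :=
  ⟨inv_nonneg.2 (Nat.cast_nonneg _), Nat.cast_inv_le_one _⟩

theorem one_sub_sparseTime_pow_add_mul_sq_le {n ℓ : ℕ} (hn : n ≠ 0) (hℓ : ℓ ≠ 0) (k r : ℕ) :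
    (1 - sparseTime r n ℓ) ^ (n ^ r * ℓ ^ 3) +
        ((n ^ r * ℓ ^ 3 : ℕ) : ℝ) * (2 ^ (k + 1) * n ^ r * sparseTime r n ℓ ^ 2) ≤
      Real.exp (-ℓ) + 2 ^ (k + 1) / ℓ := by
  refine add_le_add ((one_sub_pow_le_exp_neg_mul (sparseTime_mem_Icc r n ℓ).2 _).trans_eq ?_)
    (le_of_eq ?_) <;> simp only [sparseTime] <;> push_cast <;> field_simp

theorem tendsto_measureReal_not_hasIsolatedSimplex (hj : 1 ≤ j) (hjk : j < k)
    (hℓ : Tendsto ℓ atTop atTop) (hℓn : ∀ᶠ n in atTop, ℓ n ^ 3 ≤ n) :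
    Tendsto (fun n ↦ (birthMeasure n).real {t | ¬ HasIsolatedSimplex
      (complexAt k n t (sparseTime (k - j) n (ℓ n))) k j}) atTop (nhds 0) := by
  have hℓR : Tendsto (fun n ↦ (ℓ n : ℝ)) atTop atTop := tendsto_natCast_atTop_atTop.comp hℓ
  have hlim : Tendsto (fun n ↦ Real.exp (-ℓ n) + 2 ^ (k + 1) / ℓ n) atTop (nhds 0) := by
    simpa using (Real.tendsto_exp_neg_atTop_nhds_zero.comp hℓR).add (hℓR.const_div_atTop _)
  refine squeeze_zero' (.of_forall fun n ↦ measureReal_nonneg) ?_ hlim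
  filter_upwards [eventually_pow_le_choose k, hℓ.eventually_ne_atTop 0, eventually_ne_atTop 0,
    hℓn] with n hchoose hℓ0 hn0 hℓn
  have hm : n ^ (k - j) * ℓ n ^ 3 ≤ n.choose (k + 1) :=
    calc n ^ (k - j) * ℓ n ^ 3 ≤ n ^ (k - j) * n := Nat.mul_le_mul_left _ hℓn
      _ = n ^ (k - j + 1) := (pow_succ _ _).symm
      _ ≤ n ^ k := Nat.pow_le_pow_right (Nat.pos_of_ne_zero hn0) (by lia)
      _ ≤ n.choose (k + 1) := hchoose
  exact (measureReal_not_hasIsolatedSimplex_le (by lia) hm (sparseTime_mem_Icc _ _ _)).trans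
    (one_sub_sparseTime_pow_add_mul_sq_le hn0 hℓ0 k (k - j))

theorem exists_div_sq_le_one_sub_one_sub_sparseTime_pow (r : ℕ) :
    ∃ c > 0, ∀ᶠ n : ℕ in atTop, ∀ ℓ : ℕ, ℓ ≠ 0 →
      c / ℓ ^ 2 ≤ 1 - (1 - sparseTime r n ℓ) ^ (n / 4).choose r := by
  obtain ⟨c, hc, hchoose⟩ := exists_mul_pow_le_choose_div_four r
  refine ⟨c / (1 + c), by positivity, ?_⟩
  filter_upwards [hchoose, eventually_ne_atTop 0] with n hn hn0 ℓ hℓ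
  obtain ⟨hp0, hp1⟩ := sparseTime_mem_Icc r n ℓ
  have hℓ1 : (1 : ℝ) ≤ ℓ ^ 2 := one_le_pow₀ (by exact_mod_cast Nat.one_le_iff_ne_zero.2 hℓ)
  have hmean : c / ℓ ^ 2 ≤ (n / 4).choose r * sparseTime r n ℓ :=
    calc c / ℓ ^ 2 = c * n ^ r * sparseTime r n ℓ := by
          simp only [sparseTime]; push_cast; field_simp
      _ ≤ _ := by gcongr
  calc c / (1 + c) / ℓ ^ 2 = c / ℓ ^ 2 / (1 + c) := div_right_comm _ _ _
    _ ≤ c / ℓ ^ 2 / (1 + c / ℓ ^ 2) := by gcongr; exact div_le_self hc.le hℓ1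
    _ ≤ 1 - Real.exp (-(c / ℓ ^ 2)) := div_one_add_le_one_sub_exp_neg (by positivity)
    _ ≤ 1 - Real.exp (-((n / 4).choose r * sparseTime r n ℓ)) := by gcongr
    _ ≤ _ := sub_le_sub_left (one_sub_pow_le_exp_neg_mul hp1 _) 1

theorem exists_one_sub_pow_le_exp_neg_mul_sqrt (r : ℕ) (hℓ : ∀ᶠ n in atTop, ℓ n ≠ 0)
    (hℓn : ∀ᶠ n in atTop, ℓ n ^ (4 * (j + 1)) ≤ n) :
    ∃ b > 0, ∀ᶠ n : ℕ in atTop,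
      (1 - (1 - (1 - sparseTime r n (ℓ n)) ^ (n / 4).choose r) ^ (j + 1)) ^ (n / 4) ≤
        Real.exp (-b * Real.sqrt n) := by
  obtain ⟨c, hc, hcℓ⟩ := exists_div_sq_le_one_sub_one_sub_sparseTime_pow r
  refine ⟨c ^ (j + 1) / 8, by positivity, ?_⟩
  filter_upwards [hcℓ, hℓ, hℓn, eventually_ge_atTop 4] with n hn hℓ0 hℓn h4
  obtain ⟨hp0, hp1⟩ := sparseTime_mem_Icc r n (ℓ n)
  set q := 1 - (1 - sparseTime r n (ℓ n)) ^ (n / 4).choose r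
  have hq0 : 0 ≤ q := sub_nonneg.2 (pow_le_one₀ (sub_nonneg.2 hp1) (sub_le_self 1 hp0))
  have hq1 : q ≤ 1 := sub_le_self 1 (pow_nonneg (sub_nonneg.2 hp1) _)
  have hsqrt : (ℓ n : ℝ) ^ (2 * (j + 1)) ≤ Real.sqrt n := by
    refine Real.le_sqrt_of_sq_le ?_
    rw [← pow_mul, mul_right_comm]
    exact_mod_cast hℓn
  have hqpow : c ^ (j + 1) / Real.sqrt n ≤ q ^ (j + 1) :=
    calc c ^ (j + 1) / Real.sqrt n ≤ c ^ (j + 1) / (ℓ n : ℝ) ^ (2 * (j + 1)) := by gcongr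
      _ = (c / (ℓ n : ℝ) ^ 2) ^ (j + 1) := by rw [div_pow, pow_mul]
      _ ≤ q ^ (j + 1) := by gcongr; exact hn (ℓ n) hℓ0
  have h8 : (n : ℝ) / 8 ≤ (n / 4 : ℕ) := by
    rw [div_le_iff₀' (by norm_num)]
    exact_mod_cast (by lia : n ≤ 8 * (n / 4))
  refine (one_sub_pow_le_exp_neg_mul (pow_le_one₀ hq0 hq1) _).trans (Real.exp_le_exp.2 ?_)
  rw [neg_mul, neg_le_neg_iff]
  calc c ^ (j + 1) / 8 * Real.sqrt n = n / 8 * (c ^ (j + 1) / Real.sqrt n) := by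
        nth_rw 2 [← Real.mul_self_sqrt n.cast_nonneg]
        field_simp
    _ ≤ (n / 4 : ℕ) * q ^ (j + 1) := by gcongr

theorem tendsto_measureReal_not_hasShellExtensions (hjk : j ≤ k) (hℓ : Tendsto ℓ atTop atTop)
    (hℓn : ∀ᶠ n in atTop, ℓ n ^ (4 * (j + 1)) ≤ n) :
    Tendsto (fun n ↦ (birthMeasure n).real {t | ¬ HasShellExtensions
      (complexAt k n t (sparseTime (k - j) n (ℓ n))) k j}) atTop (nhds 0) := by
  obtain ⟨b, hb, hexp⟩ :=
    exists_one_sub_pow_le_exp_neg_mul_sqrt (k - j) (hℓ.eventually_ne_atTop 0) hℓn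
  have hlim := (tendsto_pow_mul_exp_neg_mul_sqrt (k + 1) hb).const_mul
    ((k + 1).choose (j + 1) : ℝ)
  rw [mul_zero] at hlim
  refine squeeze_zero' (.of_forall fun n ↦ measureReal_nonneg) ?_ hlim
  filter_upwards [hexp, eventually_ge_atTop (2 * (k + 1))] with n hn hkn
  refine (measureReal_not_hasShellExtensions_le hjk (h := n / 4) (by lia)
    (sparseTime_mem_Icc _ _ _)).trans ?_
  rw [mul_left_comm]
  gcongr

end Asymptotics

/-- Corollary 4.6: whp, for all `p ≥ p_{M_j}` simultaneously, there are no copies of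
`M_j^-` in `G_p`. -/
theorem statement12 (k j : ℕ) (hk : 2 ≤ k) (hj : 1 ≤ j) (hjk : j < k) :
    Tendsto (fun n : ℕ => birthMeasure n {t : Finset (Fin n) → ℝ |
      ∀ p : ℝ, pMj k j n t ≤ p →
        ∀ K C : Finset (Fin n), ¬ IsMjMinus (complexAt k n t p) k j K C})
      atTop (nhds 1) := by
  obtain ⟨ℓ, hℓ, hℓn⟩ := exists_tendsto_atTop_pow_le (r := 4 * (j + 1)) (by lia)
  have hℓn3 : ∀ᶠ n in atTop, ℓ n ^ 3 ≤ n := (hℓ.eventually_ge_atTop 1).mono fun n hn ↦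
    (Nat.pow_le_pow_right hn (by lia)).trans (hℓn n)
  let p₀ (n : ℕ) : ℝ := sparseTime (k - j) n (ℓ n)
  let bad (n : ℕ) : Set (Finset (Fin n) → ℝ) :=
    {t | ¬ HasIsolatedSimplex (complexAt k n t (p₀ n)) k j} ∪
      {t | ¬ HasShellExtensions (complexAt k n t (p₀ n)) k j}
  have hbad : Tendsto (fun n ↦ (birthMeasure n).real (bad n)) atTop (nhds 0) := by
    refine squeeze_zero (fun _ ↦ measureReal_nonneg) (fun _ ↦ measureReal_union_le _ _) ?_
    rw [← add_zero (0 : ℝ)]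
    exact (tendsto_measureReal_not_hasIsolatedSimplex hj hjk hℓ hℓn3).add
      (tendsto_measureReal_not_hasShellExtensions hjk.le hℓ (.of_forall hℓn))
  refine tendsto_measure_one_of_ae_mem_or_mem ?_ hbad
  filter_upwards [eventually_gt_atTop (k + 1)] with n hn
  filter_upwards [ae_birth_le_one n] with t ht
  rw [or_iff_not_imp_left]
  intro hgood p hp K C
  obtain ⟨hiso, hext⟩ := not_or.1 hgood
  exact not_isMjMinus_of_pMj_le hj hjk hn (sparseTime_mem_Icc _ _ _) ht (not_not.1 hiso)
    (not_not.1 hext) hp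

end RSC
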